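/- Let M = (S, A, P, R, H, μ) be a finite MDP with H ≥ 2·ln(8 · (|S|+1)^{4(|S|+1)}). For any state-action pair z ∈ S × A there exists a stationary policy π : S → A such that for every non-stationary deterministic policy π′, Pr[Σ_{h=0}^{⌊H/2⌋−1} 1[(s_h, a_h) = z] ≥ 1] ≥ (1/(512 · (|S|+1)^{12(|S|+1)})) · Pr[Σ_{h=0}^{H−1} 1[(s′_h, a′_h) = z] ≥ 1], where (s_0, a_0), …, (s_{H−1}, a_{H−1}), s_H is a random trajectory induced by executing π in M and (s′_0, a′_0), …, (s′_{H−1}, a′_{H−1}), s′_H is a random trajectory induced by executing π′ in M. -/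

import Mathlib

open Finset

/-- Extend a trajectory `(s_0, …, s_H)` to a function `ℕ → S` (constant after time `H`). -/
def extT {S : Type} (H : ℕ) (T : Fin (H + 1) → S) : ℕ → S :=
  fun n => T ⟨min n H, Nat.lt_succ_of_le (Nat.min_le_right n H)⟩

/-- Probability of the trajectory with state sequence `f` under the (possibly non-stationary)
deterministic policy `π`: `p(T, M, π) = μ(s_0) · ∏_{h<H} P(s_{h+1} ∣ s_h, π_h(s_h))`. -/
noncomputable def trajP {S A : Type} (μ : S → ℝ) (P : S → A → S → ℝ)
    (π : ℕ → S → A) (H : ℕ) (f : ℕ → S) : ℝ :=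
  μ (f 0) * ∏ h ∈ Finset.range H, P (f h) (π h (f h)) (f (h + 1))

/-- Number of times the state-action pair `z` is visited during the first `K` steps of the
trajectory with state sequence `f`, when actions are chosen by the policy `π`. -/
def nVisits {S A : Type} [DecidableEq S] [DecidableEq A] (π : ℕ → S → A) (K : ℕ)
    (z : S × A) (f : ℕ → S) : ℕ :=
  ∑ h ∈ Finset.range K, if (f h, π h (f h)) = z then 1 else 0

open Matrix in
/-- Discounted occupation sum `∑_{j < N} γ ^ j M ^ j b`. -/
noncomputable def discSum {S : Type} [Fintype S] [DecidableEq S] (γ : ℝ) (M : Matrix S S ℝ)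
    (b : S → ℝ) (N : ℕ) (s : S) : ℝ :=
  ∑ j ∈ Finset.range N, γ ^ j * (M ^ j *ᵥ b) s

/-- Probability of visiting `z` during the first `k` steps from state `s` under policy `π`. -/
noncomputable def hitProb {S A : Type} [Fintype S] [DecidableEq S] [DecidableEq A]
    (P : S → A → S → ℝ) (z : S × A) : ℕ → (ℕ → S → A) → S → ℝ
  | 0, _, _ => 0
  | k + 1, π, s => if (s, π 0 s) = z then 1 else
      ∑ s', P s (π 0 s) s' * hitProb P z k (fun h => π (h + 1)) s'

section SubstochasticMatrix

open Matrix

theorem single_one_nonneg {S : Type} [DecidableEq S] (s i : S) : 0 ≤ (Pi.single s 1 : S → ℝ) i := by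
  rw [Pi.single_apply]
  split_ifs
  · exact zero_le_one
  · exact le_rfl

theorem updateCol_zero_nonneg {S : Type} [DecidableEq S] {M : Matrix S S ℝ}
    (hM : ∀ i j, 0 ≤ M i j) (s i j : S) : 0 ≤ M.updateCol s 0 i j := by
  rw [updateCol_apply]
  split_ifs
  · exact le_rfl
  · exact hM i j

theorem mulVec_le_of_le {S : Type} [Fintype S] {M : Matrix S S ℝ} (hM : ∀ i j, 0 ≤ M i j)
    (hM1 : ∀ i, ∑ j, M i j ≤ 1) {b : S → ℝ} {c : ℝ} (hc : 0 ≤ c) (hb : ∀ i, b i ≤ c) (s : S) :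
    (M *ᵥ b) s ≤ c :=
  calc (M *ᵥ b) s ≤ ∑ j, M s j * c :=
        Finset.sum_le_sum fun j _ => mul_le_mul_of_nonneg_left (hb j) (hM s j)
    _ = (∑ j, M s j) * c := by rw [Finset.sum_mul]
    _ ≤ 1 * c := mul_le_mul_of_nonneg_right (hM1 s) hc
    _ = c := one_mul c

variable {S : Type} [Fintype S] [DecidableEq S]

theorem pow_mulVec_nonneg {M : Matrix S S ℝ} (hM : ∀ i j, 0 ≤ M i j) {b : S → ℝ}
    (hb : ∀ i, 0 ≤ b i) (k : ℕ) (s : S) : 0 ≤ (M ^ k *ᵥ b) s := by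
  induction k generalizing s with
  | zero => simpa using hb s
  | succ k ih =>
    rw [pow_succ', ← mulVec_mulVec]
    exact Finset.sum_nonneg fun j _ => mul_nonneg (hM s j) (ih j)

theorem pow_mulVec_le_of_le {M : Matrix S S ℝ} (hM : ∀ i j, 0 ≤ M i j)
    (hM1 : ∀ i, ∑ j, M i j ≤ 1) {b : S → ℝ} {c : ℝ} (hc : 0 ≤ c) (hb : ∀ i, b i ≤ c)
    (k : ℕ) (s : S) : (M ^ k *ᵥ b) s ≤ c := by
  induction k generalizing s with
  | zero => simpa using hb s
  | succ k ih =>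
    rw [pow_succ', ← mulVec_mulVec]
    exact mulVec_le_of_le hM hM1 hc ih s

theorem discSum_nonneg {γ : ℝ} (hγ : 0 ≤ γ) {M : Matrix S S ℝ} (hM : ∀ i j, 0 ≤ M i j)
    {b : S → ℝ} (hb : ∀ i, 0 ≤ b i) (N : ℕ) (s : S) : 0 ≤ discSum γ M b N s :=
  Finset.sum_nonneg fun j _ => mul_nonneg (pow_nonneg hγ j) (pow_mulVec_nonneg hM hb j s)

theorem discSum_mono {γ : ℝ} (hγ : 0 ≤ γ) {M : Matrix S S ℝ} (hM : ∀ i j, 0 ≤ M i j)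
    {b : S → ℝ} (hb : ∀ i, 0 ≤ b i) (s : S) : Monotone fun N => discSum γ M b N s := by
  intro N N' h
  exact Finset.sum_le_sum_of_subset_of_nonneg (Finset.range_mono h)
    fun j _ _ => mul_nonneg (pow_nonneg hγ j) (pow_mulVec_nonneg hM hb j s)

theorem discSum_le_discSum_one {γ : ℝ} (hγ : 0 ≤ γ) (hγ1 : γ ≤ 1) {M : Matrix S S ℝ}
    (hM : ∀ i j, 0 ≤ M i j) {b : S → ℝ} (hb : ∀ i, 0 ≤ b i) (N : ℕ) (s : S) :
    discSum γ M b N s ≤ discSum 1 M b N s :=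
  Finset.sum_le_sum fun j _ => mul_le_mul_of_nonneg_right
    (by simpa using pow_le_one₀ hγ hγ1) (pow_mulVec_nonneg hM hb j s)

theorem discSum_add (γ : ℝ) (M : Matrix S S ℝ) (b : S → ℝ) (m N : ℕ) (s : S) :
    discSum γ M b (m + N) s =
      discSum γ M b m s + γ ^ m * (M ^ m *ᵥ fun i => discSum γ M b N i) s := by
  have h : (fun i => discSum γ M b N i) = ∑ j ∈ Finset.range N, γ ^ j • (M ^ j *ᵥ b) := by
    ext i
    simp [discSum, Finset.sum_apply]
  rw [h, discSum, Finset.sum_range_add, discSum, mulVec_sum, Finset.sum_apply, Finset.mul_sum]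
  congr 1
  refine Finset.sum_congr rfl fun j _ => ?_
  rw [mulVec_smul, mulVec_mulVec, ← pow_add, Pi.smul_apply, smul_eq_mul, pow_add, mul_assoc]

theorem discSum_succ (γ : ℝ) (M : Matrix S S ℝ) (b : S → ℝ) (N : ℕ) (s : S) :
    discSum γ M b (N + 1) s = b s + γ * ∑ i, M s i * discSum γ M b N i := by
  rw [add_comm N 1, discSum_add, discSum, Finset.sum_range_one, pow_zero, pow_zero, one_mulVec,
    one_mul, pow_one, pow_one]
  rfl

/-- The expected number of visits to `s` is largest when starting from `s`. -/
theorem discSum_single_le {γ : ℝ} (hγ : 0 ≤ γ) (hγ1 : γ ≤ 1) {M : Matrix S S ℝ}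
    (hM : ∀ i j, 0 ≤ M i j) (hM1 : ∀ i, ∑ j, M i j ≤ 1) (s : S) (N : ℕ) (i : S) :
    discSum γ M (Pi.single s 1) N i ≤ discSum γ M (Pi.single s 1) N s := by
  have hb : ∀ i, 0 ≤ (Pi.single s 1 : S → ℝ) i := single_one_nonneg s
  induction N generalizing i with
  | zero => simp [discSum]
  | succ N ih =>
    by_cases his : i = s
    · rw [his]
    · have h0 := discSum_nonneg hγ hM hb N s
      have h1 : ∑ j, M i j * discSum γ M (Pi.single s 1) N j ≤ discSum γ M (Pi.single s 1) N s :=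
        mulVec_le_of_le hM hM1 h0 ih i
      calc discSum γ M (Pi.single s 1) (N + 1) i
          = γ * ∑ j, M i j * discSum γ M (Pi.single s 1) N j := by
            rw [discSum_succ, Pi.single_eq_of_ne his, zero_add]
        _ ≤ γ * discSum γ M (Pi.single s 1) N s := mul_le_mul_of_nonneg_left h1 hγ
        _ ≤ discSum γ M (Pi.single s 1) N s := mul_le_of_le_one_left h0 hγ1
        _ ≤ _ := discSum_mono hγ hM hb s (Nat.le_succ N)

theorem discSum_single_le_two_mul {γ : ℝ} (hγ : 0 ≤ γ) (hγ1 : γ ≤ 1) {m : ℕ}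
    (hm : γ ^ m ≤ 1 / 2) {M : Matrix S S ℝ} (hM : ∀ i j, 0 ≤ M i j)
    (hM1 : ∀ i, ∑ j, M i j ≤ 1) (s : S) (N : ℕ) :
    discSum γ M (Pi.single s 1) N s ≤ 2 * discSum 1 M (Pi.single s 1) m s := by
  have hb : ∀ i, 0 ≤ (Pi.single s 1 : S → ℝ) i := single_one_nonneg s
  have h0 := discSum_nonneg hγ hM hb N s
  have h1 := discSum_add γ M (Pi.single s 1) m N s
  have h2 := pow_mulVec_le_of_le hM hM1 h0 (discSum_single_le hγ hγ1 hM hM1 s N) m s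
  have h3 := discSum_mono hγ hM hb s (Nat.le_add_left N m)
  have h4 := discSum_le_discSum_one hγ hγ1 hM hb m s
  have h5 := mul_le_mul_of_nonneg_left h2 (pow_nonneg hγ m)
  have h6 := mul_le_mul_of_nonneg_right hm h0
  simp only at h3
  linarith

/-- Last-exit decomposition at `s`. -/
theorem pow_mulVec_eq_sum_updateCol (M : Matrix S S ℝ) (s : S) (b : S → ℝ) (j : ℕ) :
    (M ^ j *ᵥ b) s = ∑ i ∈ Finset.range (j + 1),
      (M ^ i *ᵥ Pi.single s 1) s * (M.updateCol s 0 ^ (j - i) *ᵥ b) s := by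
  have hdec : ∀ b : S → ℝ,
      M *ᵥ b = M.updateCol s 0 *ᵥ b + b s • (M *ᵥ Pi.single s 1) := by
    intro b
    ext x
    simp only [mulVec, dotProduct, Pi.add_apply, Pi.smul_apply, smul_eq_mul, updateCol_apply,
      Pi.zero_apply, Pi.single_apply, mul_ite, mul_one, mul_zero, Finset.sum_ite_eq',
      Finset.mem_univ, if_true, ite_mul, zero_mul]
    rw [← Finset.add_sum_erase _ _ (Finset.mem_univ s),
      ← Finset.add_sum_erase (Finset.univ) (fun y => if y = s then 0 else M x y * b y)
        (Finset.mem_univ s), if_pos rfl, zero_add, add_comm, mul_comm (b s)]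
    congr 1
    exact Finset.sum_congr rfl fun y hy => (if_neg (Finset.ne_of_mem_erase hy)).symm
  induction j generalizing b with
  | zero => simp
  | succ j ih =>
    rw [pow_succ, ← mulVec_mulVec, ih, Finset.sum_range_succ _ (j + 1)]
    have h : (M ^ (j + 1) *ᵥ Pi.single s 1) s = ∑ i ∈ Finset.range (j + 1),
        (M ^ i *ᵥ Pi.single s 1) s *
          (M.updateCol s 0 ^ (j - i) *ᵥ (M *ᵥ Pi.single s 1)) s := by
      rw [pow_succ, ← mulVec_mulVec, ih]
    rw [h, Nat.sub_self, pow_zero, one_mulVec, Finset.sum_mul, ← Finset.sum_add_distrib]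
    refine Finset.sum_congr rfl fun i hi => ?_
    have hi' : j + 1 - i = (j - i) + 1 := by
      have := Finset.mem_range.1 hi
      omega
    rw [hdec b, mulVec_add, mulVec_smul, mulVec_mulVec, ← pow_succ, hi', Pi.add_apply,
      Pi.smul_apply, smul_eq_mul]
    ring

theorem discSum_eq_sum_updateCol (γ : ℝ) (M : Matrix S S ℝ) (s : S) (b : S → ℝ) (N : ℕ) :
    discSum γ M b N s = ∑ i ∈ Finset.range N, ∑ k ∈ Finset.range (N - i),
      (γ ^ i * (M ^ i *ᵥ Pi.single s 1) s) * (γ ^ k * (M.updateCol s 0 ^ k *ᵥ b) s) := by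
  rw [← Finset.sum_range_diag_flip N fun i k =>
    (γ ^ i * (M ^ i *ᵥ Pi.single s 1) s) * (γ ^ k * (M.updateCol s 0 ^ k *ᵥ b) s)]
  refine Finset.sum_congr rfl fun j _ => ?_
  rw [pow_mulVec_eq_sum_updateCol, Finset.mul_sum]
  refine Finset.sum_congr rfl fun i hi => ?_
  have hi' : γ ^ j = γ ^ i * γ ^ (j - i) := by
    rw [← pow_add, Nat.add_sub_cancel' (Nat.lt_succ_iff.1 (Finset.mem_range.1 hi))]
  rw [hi']
  ring

theorem discSum_le_mul_updateCol {γ : ℝ} (hγ : 0 ≤ γ) {M : Matrix S S ℝ}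
    (hM : ∀ i j, 0 ≤ M i j) (s : S) {b : S → ℝ} (hb : ∀ i, 0 ≤ b i) (N : ℕ) :
    discSum γ M b N s ≤
      discSum γ M (Pi.single s 1) N s * discSum γ (M.updateCol s 0) b N s := by
  have hs : ∀ i, 0 ≤ (Pi.single s 1 : S → ℝ) i := single_one_nonneg s
  have hM' := updateCol_zero_nonneg hM s
  rw [discSum_eq_sum_updateCol, discSum, discSum, Finset.sum_mul_sum]
  refine Finset.sum_le_sum fun i _ => Finset.sum_le_sum_of_subset_of_nonneg
    (Finset.range_mono (Nat.sub_le N i)) fun k _ _ => ?_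
  exact mul_nonneg (mul_nonneg (pow_nonneg hγ i) (pow_mulVec_nonneg hM hs i s))
    (mul_nonneg (pow_nonneg hγ k) (pow_mulVec_nonneg hM' hb k s))

theorem mul_updateCol_le_discSum {M : Matrix S S ℝ}
    (hM : ∀ i j, 0 ≤ M i j) (s : S) {b : S → ℝ} (hb : ∀ i, 0 ≤ b i) (m L : ℕ) :
    discSum 1 M (Pi.single s 1) m s * discSum 1 (M.updateCol s 0) b (L + 1) s ≤
      discSum 1 M b (m + L) s := by
  have hs : ∀ i, 0 ≤ (Pi.single s 1 : S → ℝ) i := single_one_nonneg s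
  have hM' := updateCol_zero_nonneg hM s
  have h0 : ∀ i k, 0 ≤ ((1 : ℝ) ^ i * (M ^ i *ᵥ Pi.single s 1) s) *
      (1 ^ k * (M.updateCol s 0 ^ k *ᵥ b) s) := fun i k =>
    mul_nonneg (mul_nonneg (pow_nonneg zero_le_one i) (pow_mulVec_nonneg hM hs i s))
      (mul_nonneg (pow_nonneg zero_le_one k) (pow_mulVec_nonneg hM' hb k s))
  rw [discSum_eq_sum_updateCol 1 M s b, discSum, discSum, Finset.sum_mul_sum]
  refine (Finset.sum_le_sum fun i hi => Finset.sum_le_sum_of_subset_of_nonneg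
    (t := Finset.range (m + L - i)) (Finset.range_mono ?_) fun k _ _ => h0 i k).trans
    (Finset.sum_le_sum_of_subset_of_nonneg (Finset.range_mono (Nat.le_add_right m L))
      fun i _ _ => Finset.sum_nonneg fun k _ => h0 i k)
  have := Finset.mem_range.1 hi
  omega

/-- For a substochastic matrix whose columns vanish outside `D`, the discounted occupation sum
is controlled by the undiscounted one over `D.card * m + 1` steps, `m` being a half-life of the
discounting. -/
theorem discSum_le_two_pow_mul {γ : ℝ} (hγ : 0 ≤ γ) (hγ1 : γ ≤ 1) {m : ℕ}
    (hm : γ ^ m ≤ 1 / 2) {b : S → ℝ} (hb : ∀ i, 0 ≤ b i) (r : ℕ) (D : Finset S)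
    (hD : D.card = r) (M : Matrix S S ℝ) (hM : ∀ i j, 0 ≤ M i j) (hM1 : ∀ i, ∑ j, M i j ≤ 1)
    (hMD : ∀ i, ∀ j ∉ D, M i j = 0) (N : ℕ) (s : S) :
    discSum γ M b N s ≤ 2 ^ r * discSum 1 M b (r * m + 1) s := by
  induction r generalizing D M N s with
  | zero =>
    have hM0 : ∀ i j, M i j = 0 := fun i j => hMD i j (by simp [Finset.card_eq_zero.1 hD])
    refine (discSum_mono hγ hM hb s (Nat.le_succ N)).trans ?_
    simp [discSum_succ, hM0]
  | succ r ih =>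
    have hmem : ∀ s ∈ D, ∀ N, discSum γ M b N s ≤ 2 ^ (r + 1) * discSum 1 M b (m + r * m) s := by
      intro s hs N
      have hM' := updateCol_zero_nonneg hM s
      have hle : ∀ i j, M.updateCol s 0 i j ≤ M i j := by
        intro i j
        rw [updateCol_apply]
        split_ifs
        · exact hM i j
        · exact le_rfl
      have h1 := ih (D.erase s) (by rw [Finset.card_erase_of_mem hs, hD, Nat.add_sub_cancel])
        (M.updateCol s 0) hM'
        (fun i => (Finset.sum_le_sum fun j _ => hle i j).trans (hM1 i))
        (fun i j hj => by
          rw [updateCol_apply]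
          split_ifs with h
          · rfl
          · exact hMD i j fun hjD => hj (Finset.mem_erase.2 ⟨h, hjD⟩)) N s
      have h2 := discSum_le_mul_updateCol hγ hM s hb N
      have h3 := mul_updateCol_le_discSum hM s hb m (r * m)
      have h4 := discSum_single_le_two_mul hγ hγ1 hm hM hM1 s N
      have hs0 : ∀ i, 0 ≤ (Pi.single s 1 : S → ℝ) i := single_one_nonneg s
      calc discSum γ M b N s ≤ _ := h2
        _ ≤ (2 * discSum 1 M (Pi.single s 1) m s) *
            (2 ^ r * discSum 1 (M.updateCol s 0) b (r * m + 1) s) :=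
          mul_le_mul h4 h1 (discSum_nonneg hγ hM' hb N s)
            (mul_nonneg zero_le_two (discSum_nonneg zero_le_one hM hs0 m s))
        _ = 2 ^ (r + 1) * (discSum 1 M (Pi.single s 1) m s *
            discSum 1 (M.updateCol s 0) b (r * m + 1) s) := by ring
        _ ≤ _ := mul_le_mul_of_nonneg_left h3 (by positivity)
    have hlen : (r + 1) * m + 1 = (m + r * m) + 1 := by ring
    have h2r : (1 : ℝ) ≤ 2 ^ (r + 1) := one_le_pow₀ one_le_two
    refine (discSum_mono hγ hM hb s (Nat.le_succ N)).trans ?_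
    simp only [Nat.succ_eq_add_one]
    rw [hlen, discSum_succ, discSum_succ, one_mul, mul_add,
      Finset.mul_sum Finset.univ (fun i => M s i * discSum 1 M b (m + r * m) i)]
    refine add_le_add (le_mul_of_one_le_left (hb s) h2r) ?_
    refine (mul_le_of_le_one_left (Finset.sum_nonneg fun i _ => mul_nonneg (hM s i)
      (discSum_nonneg hγ hM hb N i)) hγ1).trans (Finset.sum_le_sum fun i _ => ?_)
    by_cases hi : i ∈ D
    · calc M s i * discSum γ M b N i ≤ M s i * (2 ^ (r + 1) * discSum 1 M b (m + r * m) i) :=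
            mul_le_mul_of_nonneg_left (hmem i hi N) (hM s i)
        _ = _ := by ring
    · simp [hMD s i hi]

/-- A bounded function that is subharmonic for the discounted chain is controlled by the
undiscounted occupation sum. -/
theorem le_two_pow_mul_discSum {γ : ℝ} (hγ : 0 ≤ γ) (hγ1 : γ < 1) {m : ℕ}
    (hm : γ ^ m ≤ 1 / 2) {b : S → ℝ} (hb : ∀ i, 0 ≤ b i) {M : Matrix S S ℝ}
    (hM : ∀ i j, 0 ≤ M i j) (hM1 : ∀ i, ∑ j, M i j ≤ 1) {V : S → ℝ} (hV : ∀ s, V s ≤ 1)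
    (hVM : ∀ s, V s ≤ b s + γ * ∑ i, M s i * V i) (s : S) :
    V s ≤ 2 ^ Fintype.card S * discSum 1 M b (Fintype.card S * m + 1) s := by
  have hiter : ∀ N s, V s ≤ discSum γ M b N s + γ ^ N := by
    intro N
    induction N with
    | zero => simpa [discSum] using hV
    | succ N ih =>
      intro s
      have h1 : ∑ i, M s i * V i ≤ ∑ i, M s i * discSum γ M b N i + γ ^ N :=
        calc ∑ i, M s i * V i ≤ ∑ i, M s i * (discSum γ M b N i + γ ^ N) :=
              Finset.sum_le_sum fun i _ => mul_le_mul_of_nonneg_left (ih i) (hM s i)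
          _ = ∑ i, M s i * discSum γ M b N i + (∑ i, M s i) * γ ^ N := by
              simp only [mul_add, Finset.sum_add_distrib, Finset.sum_mul]
          _ ≤ _ := by
              gcongr
              exact mul_le_of_le_one_left (pow_nonneg hγ N) (hM1 s)
      have h2 := mul_le_mul_of_nonneg_left h1 hγ
      rw [discSum_succ, pow_succ]
      linarith [hVM s]
  have hlim : Filter.Tendsto (fun N : ℕ => 2 ^ Fintype.card S *
      discSum 1 M b (Fintype.card S * m + 1) s + γ ^ N) Filter.atTop
      (nhds (2 ^ Fintype.card S * discSum 1 M b (Fintype.card S * m + 1) s + 0)) :=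
    tendsto_const_nhds.add (tendsto_pow_atTop_nhds_zero_of_lt_one hγ hγ1)
  rw [add_zero] at hlim
  refine ge_of_tendsto' hlim fun N => (hiter N s).trans (add_le_add ?_ le_rfl)
  exact discSum_le_two_pow_mul hγ hγ1.le hm hb _ Finset.univ rfl M hM hM1
    (fun i j hj => absurd (Finset.mem_univ j) hj) N s

end SubstochasticMatrix

section Trajectory

variable {S A : Type}

theorem extT_cons_zero (H : ℕ) (s : S) (T : Fin (H + 1) → S) :
    extT (H + 1) (Fin.cons s T : Fin (H + 2) → S) 0 = s := by
  simp [extT]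

theorem extT_cons_succ (H : ℕ) (s : S) (T : Fin (H + 1) → S) (h : ℕ) :
    extT (H + 1) (Fin.cons s T : Fin (H + 2) → S) (h + 1) = extT H T h := by
  have : (⟨min (h + 1) (H + 1), Nat.lt_succ_of_le (Nat.min_le_right _ _)⟩ : Fin (H + 2)) =
      Fin.succ ⟨min h H, Nat.lt_succ_of_le (Nat.min_le_right _ _)⟩ := by
    ext
    simp
  rw [extT, this, Fin.cons_succ, extT]

theorem trajP_cons (μ : S → ℝ) (P : S → A → S → ℝ) (π : ℕ → S → A) (H : ℕ) (s : S)
    (T : Fin (H + 1) → S) :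
    trajP μ P π (H + 1) (extT (H + 1) (Fin.cons s T : Fin (H + 2) → S)) =
      μ s * trajP (P s (π 0 s)) P (fun h => π (h + 1)) H (extT H T) := by
  simp only [trajP]
  rw [Finset.prod_range_succ']
  simp only [extT_cons_succ, extT_cons_zero]
  ring

theorem sum_fin_cons {S : Type} [Fintype S] (n : ℕ) (f : (Fin (n + 1) → S) → ℝ) :
    ∑ T, f T = ∑ s, ∑ T : Fin n → S, f (Fin.cons s T) := by
  rw [← (Fin.consEquiv fun _ : Fin (n + 1) => S).sum_comp, Fintype.sum_prod_type]
  rfl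

theorem sum_trajP {S A : Type} [Fintype S] (μ : S → ℝ) {P : S → A → S → ℝ} (hP1 : ∀ s a, ∑ s', P s a s' = 1)
    (π : ℕ → S → A) (H : ℕ) :
    ∑ T : Fin (H + 1) → S, trajP μ P π H (extT H T) = ∑ s, μ s := by
  induction H generalizing μ π with
  | zero =>
    rw [sum_fin_cons]
    simp [trajP, extT]
  | succ H ih =>
    rw [sum_fin_cons]
    refine Finset.sum_congr rfl fun s _ => ?_
    simp only [trajP_cons]
    rw [← Finset.mul_sum, ih, hP1, mul_one]

variable [DecidableEq S] [DecidableEq A]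

theorem nVisits_cons (π : ℕ → S → A) (z : S × A) (H K : ℕ) (s : S) (T : Fin (H + 1) → S) :
    nVisits π (K + 1) z (extT (H + 1) (Fin.cons s T : Fin (H + 2) → S)) =
      nVisits (fun h => π (h + 1)) K z (extT H T) + if (s, π 0 s) = z then 1 else 0 := by
  simp only [nVisits]
  rw [Finset.sum_range_succ']
  simp only [extT_cons_succ, extT_cons_zero]

variable [Fintype S]

theorem sum_trajP_visit (μ : S → ℝ) {P : S → A → S → ℝ} (hP1 : ∀ s a, ∑ s', P s a s' = 1)
    (z : S × A) (π : ℕ → S → A) (H K : ℕ) (hK : K ≤ H) :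
    (∑ T : Fin (H + 1) → S,
      if 1 ≤ nVisits π K z (extT H T) then trajP μ P π H (extT H T) else 0) =
      ∑ s, μ s * hitProb P z K π s := by
  induction H generalizing μ π K with
  | zero =>
    obtain rfl : K = 0 := by omega
    simp [nVisits, hitProb]
  | succ H ih =>
    cases K with
    | zero => simp [nVisits, hitProb]
    | succ K =>
      rw [sum_fin_cons]
      refine Finset.sum_congr rfl fun s _ => ?_
      simp only [trajP_cons, nVisits_cons, hitProb]
      split_ifs with hz
      · simp only [Nat.le_add_left, if_true]
        rw [← Finset.mul_sum, sum_trajP _ hP1, hP1]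
      · simp only [add_zero]
        rw [← ih _ _ K (by omega), Finset.mul_sum]
        simp only [mul_ite, mul_zero]

theorem hitProb_nonneg {P : S → A → S → ℝ} (hP0 : ∀ s a s', 0 ≤ P s a s') (z : S × A) (k : ℕ)
    (π : ℕ → S → A) (s : S) : 0 ≤ hitProb P z k π s := by
  induction k generalizing π s with
  | zero => exact le_rfl
  | succ k ih =>
    rw [hitProb]
    split_ifs
    · exact zero_le_one
    · exact Finset.sum_nonneg fun s' _ => mul_nonneg (hP0 _ _ _) (ih _ _)

theorem hitProb_le_one {P : S → A → S → ℝ} (hP0 : ∀ s a s', 0 ≤ P s a s')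
    (hP1 : ∀ s a, ∑ s', P s a s' = 1) (z : S × A) (k : ℕ)
    (π : ℕ → S → A) (s : S) : hitProb P z k π s ≤ 1 := by
  induction k generalizing π s with
  | zero => exact zero_le_one
  | succ k ih =>
    rw [hitProb]
    split_ifs
    · exact le_rfl
    · exact (Finset.sum_le_sum fun s' _ => mul_le_of_le_one_right (hP0 _ _ _) (ih _ _)).trans
        (hP1 _ _).le

/-- The hitting probability of a stationary policy as an occupation sum of the chain killed at
the target. -/
theorem hitProb_stationary (P : S → A → S → ℝ) (z : S × A) (π : S → A) (hπ : π z.1 = z.2)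
    (k : ℕ) (s : S) :
    hitProb P z k (fun _ => π) s =
      discSum 1 (Matrix.of fun s s' => if s = z.1 then 0 else P s (π s) s') (Pi.single z.1 1) k s := by
  induction k generalizing s with
  | zero => simp [hitProb, discSum]
  | succ k ih =>
    rw [hitProb, discSum_succ]
    by_cases hs : s = z.1
    · subst hs
      simp [hπ]
    · have : (s, π s) ≠ z := fun h => hs (congrArg Prod.fst h)
      simp [this, hs, ih]

/-- The optimal discounted value, over all horizons, of the probability of reaching `z`. -/
noncomputable def reachValue (P : S → A → S → ℝ) (z : S × A) (γ : ℝ) (s : S) : ℝ :=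
  ⨆ q : ℕ × (ℕ → S → A), γ ^ q.1 * hitProb P z q.1 q.2 s

theorem pow_mul_hitProb_le_one {P : S → A → S → ℝ} (hP0 : ∀ s a s', 0 ≤ P s a s')
    (hP1 : ∀ s a, ∑ s', P s a s' = 1) (z : S × A) {γ : ℝ} (hγ : 0 ≤ γ) (hγ1 : γ ≤ 1)
    (s : S) (k : ℕ) (π : ℕ → S → A) :
    γ ^ k * hitProb P z k π s ≤ 1 :=
  mul_le_one₀ (pow_le_one₀ hγ hγ1) (hitProb_nonneg hP0 z k π s) (hitProb_le_one hP0 hP1 z k π s)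

theorem le_reachValue {P : S → A → S → ℝ} (hP0 : ∀ s a s', 0 ≤ P s a s')
    (hP1 : ∀ s a, ∑ s', P s a s' = 1) (z : S × A) {γ : ℝ} (hγ : 0 ≤ γ) (hγ1 : γ ≤ 1)
    (s : S) (k : ℕ) (π : ℕ → S → A) :
    γ ^ k * hitProb P z k π s ≤ reachValue P z γ s :=
  le_ciSup (f := fun q : ℕ × (ℕ → S → A) => γ ^ q.1 * hitProb P z q.1 q.2 s)
    ⟨1, by
      rintro _ ⟨q, rfl⟩
      exact pow_mul_hitProb_le_one hP0 hP1 z hγ hγ1 s q.1 q.2⟩ (k, π)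

theorem reachValue_nonneg {P : S → A → S → ℝ} (hP0 : ∀ s a s', 0 ≤ P s a s')
    (hP1 : ∀ s a, ∑ s', P s a s' = 1) (z : S × A) {γ : ℝ} (hγ : 0 ≤ γ) (hγ1 : γ ≤ 1)
    (s : S) : 0 ≤ reachValue P z γ s := by
  simpa [hitProb] using le_reachValue hP0 hP1 z hγ hγ1 s 0 fun _ _ => z.2

theorem reachValue_le_one {P : S → A → S → ℝ} (hP0 : ∀ s a s', 0 ≤ P s a s')
    (hP1 : ∀ s a, ∑ s', P s a s' = 1) (z : S × A) {γ : ℝ} (hγ : 0 ≤ γ) (hγ1 : γ ≤ 1)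
    (s : S) : reachValue P z γ s ≤ 1 :=
  have : Nonempty A := ⟨z.2⟩
  ciSup_le fun q => pow_mul_hitProb_le_one hP0 hP1 z hγ hγ1 s q.1 q.2

theorem exists_action_reachValue_le {δ : ℝ} (hδ0 : 0 ≤ δ) (hδ1 : δ < 1)
    {P : S → A → S → ℝ} (hP0 : ∀ s a s', 0 ≤ P s a s') (hP1 : ∀ s a, ∑ s', P s a s' = 1)
    (z : S × A) {s : S} (hs : s ≠ z.1) :
    ∃ a, reachValue P z (δ ^ 2) s ≤ δ * ∑ s', P s a s' * reachValue P z (δ ^ 2) s' := by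
  have hγ : 0 ≤ δ ^ 2 := sq_nonneg δ
  have hγ1 : δ ^ 2 ≤ 1 := pow_le_one₀ hδ0 hδ1.le
  have : Nonempty A := ⟨z.2⟩
  have hV := reachValue_nonneg hP0 hP1 z hγ hγ1
  by_contra! hlt
  have hle : reachValue P z (δ ^ 2) s ≤ δ * reachValue P z (δ ^ 2) s := by
    refine ciSup_le fun q => ?_
    obtain ⟨k, π⟩ := q
    cases k with
    | zero => simpa [hitProb] using mul_nonneg hδ0 (hV s)
    | succ k =>
      have hz : (s, π 0 s) ≠ z := fun h => hs (congrArg Prod.fst h)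
      simp only [hitProb, if_neg hz]
      calc (δ ^ 2) ^ (k + 1) * ∑ s', P s (π 0 s) s' * hitProb P z k (fun h => π (h + 1)) s'
          = δ * (δ * ∑ s', P s (π 0 s) s' *
              ((δ ^ 2) ^ k * hitProb P z k (fun h => π (h + 1)) s')) := by
            simp only [Finset.mul_sum]
            refine Finset.sum_congr rfl fun s' _ => ?_
            ring
        _ ≤ δ * (δ * ∑ s', P s (π 0 s) s' * reachValue P z (δ ^ 2) s') := by
            refine mul_le_mul_of_nonneg_left (mul_le_mul_of_nonneg_left
              (Finset.sum_le_sum fun s' _ => mul_le_mul_of_nonneg_left ?_ (hP0 _ _ _)) hδ0) hδ0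
            exact le_reachValue hP0 hP1 z hγ hγ1 s' k _
        _ ≤ δ * reachValue P z (δ ^ 2) s := mul_le_mul_of_nonneg_left (hlt (π 0 s)).le hδ0
  have hpos : 0 < reachValue P z (δ ^ 2) s := lt_of_le_of_lt
    (mul_nonneg hδ0 (Finset.sum_nonneg fun s' _ => mul_nonneg (hP0 s z.2 s') (hV s'))) (hlt z.2)
  exact absurd hle (not_le.2 (mul_lt_of_lt_one_left hpos hδ1))

/-- Some stationary policy reaches `z` within `card S * m + 1` steps with probability comparable
to the optimal discounted value, for a discount factor with half-life `m / 2`. -/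
theorem exists_stationary_reachValue_le {δ : ℝ} (hδ0 : 0 ≤ δ) (hδ1 : δ < 1) {m : ℕ}
    (hm : δ ^ m ≤ 1 / 2) {P : S → A → S → ℝ} (hP0 : ∀ s a s', 0 ≤ P s a s')
    (hP1 : ∀ s a, ∑ s', P s a s' = 1) (z : S × A) {K : ℕ} (hK : Fintype.card S * m + 1 ≤ K) :
    ∃ π : S → A, ∀ s,
      reachValue P z (δ ^ 2) s ≤ 2 ^ Fintype.card S * hitProb P z K (fun _ => π) s := by
  have h : ∀ s, ∃ a, (s = z.1 → a = z.2) ∧ (s ≠ z.1 →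
      reachValue P z (δ ^ 2) s ≤ δ * ∑ s', P s a s' * reachValue P z (δ ^ 2) s') := by
    intro s
    by_cases hs : s = z.1
    · exact ⟨z.2, fun _ => rfl, fun h => absurd hs h⟩
    · obtain ⟨a, ha⟩ := exists_action_reachValue_le hδ0 hδ1 hP0 hP1 z hs
      exact ⟨a, fun h => absurd h hs, fun _ => ha⟩
  choose π hπz hπ using h
  have hV1 := reachValue_le_one hP0 hP1 z (sq_nonneg δ) (pow_le_one₀ hδ0 hδ1.le)
  refine ⟨π, fun s => ?_⟩
  rw [hitProb_stationary P z π (hπz _ rfl)]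
  set M : Matrix S S ℝ := Matrix.of fun s s' => if s = z.1 then 0 else P s (π s) s' with hMdef
  have hM : ∀ i j, 0 ≤ M i j := by
    intro i j
    rw [hMdef, Matrix.of_apply]
    split_ifs
    · exact le_rfl
    · exact hP0 _ _ _
  have hM1 : ∀ i, ∑ j, M i j ≤ 1 := by
    intro i
    by_cases hi : i = z.1 <;> simp [hMdef, hi, hP1]
  have hb := single_one_nonneg z.1
  refine (le_two_pow_mul_discSum hδ0 hδ1 hm hb hM hM1 hV1 (fun i => ?_) s).trans
    (mul_le_mul_of_nonneg_left (discSum_mono zero_le_one hM hb s hK) (by positivity))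
  by_cases hi : i = z.1
  · simpa [hMdef, hi] using hV1 z.1
  · simpa [hMdef, hi] using hπ i hi

end Trajectory

theorem two_mul_add_one_le_half {n H : ℕ} (hn : 1 ≤ n)
    (hH : 2 * Real.log (8 * ((n : ℝ) + 1) ^ (4 * (n + 1))) ≤ (H : ℝ)) : 2 * (n + 1) ≤ H / 2 := by
  have hn' : (1 : ℝ) ≤ n := by exact_mod_cast hn
  have h1 : (2 : ℝ) ^ (4 * (n + 1)) ≤ 8 * ((n : ℝ) + 1) ^ (4 * (n + 1)) := by
    have : (2 : ℝ) ^ (4 * (n + 1)) ≤ ((n : ℝ) + 1) ^ (4 * (n + 1)) := by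
      gcongr
      linarith
    have h0 : (0 : ℝ) ≤ ((n : ℝ) + 1) ^ (4 * (n + 1)) := by positivity
    linarith
  have h2 := Real.log_le_log (by positivity) h1
  rw [Real.log_pow] at h2
  have h3 := Real.log_two_gt_d9
  have h4 : ((4 * (n + 1) : ℕ) : ℝ) * (1 / 2) ≤ ((4 * (n + 1) : ℕ) : ℝ) * Real.log 2 :=
    mul_le_mul_of_nonneg_left (by linarith) (Nat.cast_nonneg _)
  have h5 : ((4 * (n + 1) : ℕ) : ℝ) ≤ H := by linarith
  have h6 : 4 * (n + 1) ≤ H := by exact_mod_cast h5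
  omega

theorem stmt7 {S A : Type} [Fintype S] [DecidableEq S] [DecidableEq A]
    (μ : S → ℝ) (P : S → A → S → ℝ) (H : ℕ)
    (hμ0 : ∀ s, 0 ≤ μ s) (hμ1 : ∑ s, μ s = 1)
    (hP0 : ∀ s a s', 0 ≤ P s a s') (hP1 : ∀ s a, ∑ s', P s a s' = 1)
    (hH : 2 * Real.log (8 * ((Fintype.card S : ℝ) + 1) ^ (4 * (Fintype.card S + 1))) ≤ (H : ℝ))
    (z : S × A) :
    ∃ π : S → A, ∀ π' : ℕ → S → A,
      (1 / (512 * ((Fintype.card S : ℝ) + 1) ^ (12 * (Fintype.card S + 1)))) *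
          (∑ T : Fin (H + 1) → S,
            if 1 ≤ nVisits π' H z (extT H T) then trajP μ P π' H (extT H T) else 0) ≤
        ∑ T : Fin (H + 1) → S,
          if 1 ≤ nVisits (fun _ => π) (H / 2) z (extT H T) then
            trajP μ P (fun _ => π) H (extT H T) else 0 := by
  have : Nonempty S := ⟨z.1⟩
  have hn : 1 ≤ Fintype.card S := Fintype.card_pos
  have hHK := two_mul_add_one_le_half hn hH
  have hc : 1 / (512 * ((Fintype.card S : ℝ) + 1) ^ (12 * (Fintype.card S + 1))) *
      (2 ^ Fintype.card S * 2 ^ (10 * Fintype.card S)) ≤ 1 := by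
    have h1 : (1 : ℝ) ≤ Fintype.card S := by exact_mod_cast hn
    rw [one_div_mul_eq_div, div_le_one (by positivity), ← pow_add]
    calc (2 : ℝ) ^ (Fintype.card S + 10 * Fintype.card S)
        ≤ 2 ^ (12 * (Fintype.card S + 1)) := pow_le_pow_right₀ one_le_two (by omega)
      _ ≤ ((Fintype.card S : ℝ) + 1) ^ (12 * (Fintype.card S + 1)) := by
          gcongr
          linarith
      _ ≤ _ := le_mul_of_one_le_left (by positivity) (by norm_num)
  generalize hnS : Fintype.card S = n at *
  set K := H / 2 with hK
  obtain ⟨m, hm⟩ : ∃ m, m = (K - 1) / n := ⟨_, rfl⟩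
  have hnm : n * m + 1 ≤ K := by
    have := Nat.mul_div_le (K - 1) n
    rw [← hm] at this
    omega
  have hm1 : 1 ≤ m := by
    rw [hm, Nat.one_le_div_iff hn]
    omega
  have hH5 : 2 * H ≤ m * (10 * n) := by
    have h1 := Nat.lt_mul_div_succ (K - 1) hn
    rw [← hm] at h1
    have h2 : n ≤ n * m := Nat.le_mul_of_pos_right n hm1
    have h3 : n * (m + 1) = n * m + n := by ring
    have h4 : m * (10 * n) = 10 * (n * m) := by ring
    omega
  set δ : ℝ := (1 / 2 : ℝ) ^ (m⁻¹ : ℝ) with hδ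
  have hδ0 : 0 ≤ δ := by positivity
  have hδ1 : δ < 1 := Real.rpow_lt_one (by norm_num) (by norm_num) (by positivity)
  have hδm : δ ^ m = 1 / 2 := Real.rpow_inv_natCast_pow (by norm_num) (by omega)
  have hδH : 1 ≤ 2 ^ (10 * n) * (δ ^ 2) ^ H :=
    calc (1 : ℝ) = 2 ^ (10 * n) * δ ^ (m * (10 * n)) := by
          rw [pow_mul δ, hδm, ← mul_pow]
          norm_num
      _ ≤ 2 ^ (10 * n) * (δ ^ 2) ^ H := by
          rw [← pow_mul]
          exact mul_le_mul_of_nonneg_left (pow_le_pow_of_le_one hδ0 hδ1.le hH5) (by positivity)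
  obtain ⟨π, hπ⟩ := exists_stationary_reachValue_le hδ0 hδ1 hδm.le hP0 hP1 z
    (K := K) (by rwa [hnS])
  refine ⟨π, fun π' => ?_⟩
  rw [sum_trajP_visit μ hP1 z π' H H le_rfl,
    sum_trajP_visit μ hP1 z (fun _ => π) H K (Nat.div_le_self H 2), Finset.mul_sum]
  refine Finset.sum_le_sum fun s _ => ?_
  rw [mul_left_comm]
  refine mul_le_mul_of_nonneg_left ?_ (hμ0 s)
  have hV := le_reachValue hP0 hP1 z (sq_nonneg δ) (pow_le_one₀ hδ0 hδ1.le) s H π'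
  have hle : hitProb P z H π' s ≤ 2 ^ n * 2 ^ (10 * n) * hitProb P z K (fun _ => π) s :=
    calc hitProb P z H π' s ≤ 2 ^ (10 * n) * (δ ^ 2) ^ H * hitProb P z H π' s :=
          le_mul_of_one_le_left (hitProb_nonneg hP0 z H π' s) hδH
      _ = 2 ^ (10 * n) * ((δ ^ 2) ^ H * hitProb P z H π' s) := mul_assoc _ _ _
      _ ≤ 2 ^ (10 * n) * (2 ^ n * hitProb P z K (fun _ => π) s) := by
          refine mul_le_mul_of_nonneg_left (hV.trans ?_) (by positivity)
          simpa only [hnS] using hπ s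
      _ = _ := by ring
  calc _ ≤ 1 / (512 * ((n : ℝ) + 1) ^ (12 * (n + 1))) *
        (2 ^ n * 2 ^ (10 * n) * hitProb P z K (fun _ => π) s) :=
        mul_le_mul_of_nonneg_left hle (by positivity)
    _ = 1 / (512 * ((n : ℝ) + 1) ^ (12 * (n + 1))) * (2 ^ n * 2 ^ (10 * n)) *
        hitProb P z K (fun _ => π) s := by ring
    _ ≤ _ := mul_le_of_le_one_left (hitProb_nonneg hP0 z K _ s) hc
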